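/- Let d and m be positive natural numbers, let A be an m × d matrix with integer entries, and let S = {v : Fin d → ℕ | A.mulVec (fun j => (v j : ℤ)) = 0} be the set of nonnegative integer solutions of the homogeneous system (the 'matching equations'). Let c : Fin d → ℕ (the 'boundary edge degree' of each disc type) and e : Fin d → ℤ (the 'Euler characteristic contribution' of each disc type), and for v ∈ S write c(v) = Σⱼ c(j)·v(j) and e(v) = Σⱼ e(j)·(v(j) : ℤ). Suppose that every nonzero v ∈ S with c(v) = 0 satisfies e(v) ≤ −1. Then for all natural numbers n and b, the set {v ∈ S | c(v) ≤ b and e(v) ≥ −n} is finite. -/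

import Mathlib

/-- The set of nonnegative integer solutions of the homogeneous system of
'matching equations' given by the integer matrix `A`. -/
def matchingSolutions {d m : ℕ} (A : Matrix (Fin m) (Fin d) ℤ) :
    Set (Fin d → ℕ) :=
  {v : Fin d → ℕ | A.mulVec (fun j => (v j : ℤ)) = 0}

/-!
Order the solutions componentwise. If `u ≤ v` are both solutions, then so is `w = v - u`, and the
boundary degree and the Euler characteristic of `w` are the differences of those of `v` and `u`.
If moreover `v` has boundary degree at most, and Euler characteristic at least, that of `u`, then
`w` has boundary degree zero and nonnegative Euler characteristic, so `w = 0` by hypothesis.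
Hence the solutions, each recorded together with its boundary degree (order reversed) and its Euler
characteristic, form an antichain. Under the given bounds this antichain lies in a
well-quasi-ordered set, by Dickson's lemma, and is therefore finite. This replaces the bounds on
the coefficients of fundamental solutions by a single well-quasi-order argument.
-/

theorem finite_of_isPWO_image {α β : Type*} [Preorder α] [Preorder β] {s : Set α} {f : α → β}
    (hs : s.IsPWO) (hf : (f '' s).IsPWO)
    (h : ∀ u ∈ s, ∀ v ∈ s, u ≤ v → f u ≤ f v → u = v) : s.Finite := by
  let graph : α → α × β := fun u => (u, f u)
  have graph_injective : graph.Injective := fun _ _ huv => congrArg Prod.fst huv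
  have graph_isPWO : (graph '' s).IsPWO :=
    (hs.prod hf).mono (Set.image_subset_iff.2 fun u hu => ⟨hu, Set.mem_image_of_mem f hu⟩)
  have graph_isAntichain : IsAntichain (· ≤ ·) (graph '' s) := by
    rintro _ ⟨u, hu, rfl⟩ _ ⟨v, hv, rfl⟩ hne ⟨huv, hfuv⟩
    exact hne (congrArg graph (h u hu v hv huv hfuv))
  exact (graph_isAntichain.finite_of_partiallyWellOrderedOn graph_isPWO).of_finite_image
    graph_injective.injOn

section DifferenceClosed

variable {M : Type*} [AddZeroClass M] [Preorder M] [ExistsAddOfLE M] {S : Set M}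

theorem eq_of_le_of_map_le {G : Type*} [AddZeroClass G] [LE G] [AddLeftReflectLE G] {φ : M →+ G}
    (hS : ∀ u ∈ S, ∀ w, u + w ∈ S → w ∈ S) (hφ : ∀ w ∈ S, 0 ≤ φ w → w = 0)
    {u v : M} (hu : u ∈ S) (hv : v ∈ S) (huv : u ≤ v) (hφuv : φ u ≤ φ v) : u = v := by
  obtain ⟨w, rfl⟩ := exists_add_of_le huv
  have hw : 0 ≤ φ w := le_of_add_le_add_left (a := φ u) (by simpa using hφuv)
  rw [hφ w (hS u hu w hv) hw, add_zero]

variable [WellQuasiOrderedLE M]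

theorem finite_setOf_mem_and_le_map {G : Type*} [AddZeroClass G] [Preorder G] [AddLeftReflectLE G]
    {φ : M →+ G} (hS : ∀ u ∈ S, ∀ w, u + w ∈ S → w ∈ S) (hφ : ∀ w ∈ S, 0 ≤ φ w → w = 0)
    {a : G} (ha : (Set.Ici a).IsPWO) : {v | v ∈ S ∧ a ≤ φ v}.Finite :=
  finite_of_isPWO_image (f := φ) (Set.isPWO_of_wellQuasiOrderedLE _)
    (ha.mono (Set.image_subset_iff.2 fun _ hv => hv.2))
    fun _ hu _ hv => eq_of_le_of_map_le hS hφ hu.1 hv.1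

theorem finitely_many_bounded_solutions_general (hS : ∀ u ∈ S, ∀ w, u + w ∈ S → w ∈ S)
    (c : M →+ ℕ) (e : M →+ ℤ) (h : ∀ v ∈ S, v ≠ 0 → c v = 0 → e v ≤ -1) (b : ℕ) (a : ℤ) :
    {v | v ∈ S ∧ c v ≤ b ∧ a ≤ e v}.Finite := by
  let φ : M →+ ℤ × ℤ := (-(Nat.castAddMonoidHom ℤ).comp c).prod e
  have hφ (w : M) (hw : w ∈ S) (hφw : 0 ≤ φ w) : w = 0 := by
    obtain ⟨hc, he⟩ : 0 ≤ -(c w : ℤ) ∧ 0 ≤ e w := hφw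
    by_contra hw0
    have := h w hw hw0 (by lia)
    lia
  have hIci : (Set.Ici (-(b : ℤ), a)).IsPWO := by
    rw [← Set.Ici_prod_Ici]
    exact bddBelow_Ici.isWF.isPWO.prod bddBelow_Ici.isWF.isPWO
  refine (finite_setOf_mem_and_le_map hS hφ hIci).subset fun v ⟨hv, hc, he⟩ => ⟨hv, ?_, he⟩
  exact neg_le_neg (Nat.cast_le.2 hc)

end DifferenceClosed

/-- The linear functional `v ↦ ∑ j, w j * v j` on vectors of natural numbers. The coefficient ring
is arbitrary so that it covers the boundary degree (over `ℕ`), the Euler characteristic and the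
rows of the matching equations (over `ℤ`). -/
def weightedSum {ι R : Type*} [Fintype ι] [NonAssocSemiring R] (w : ι → R) : (ι → ℕ) →+ R where
  toFun v := ∑ j, w j * (v j : R)
  map_zero' := by simp
  map_add' := by simp [mul_add, Finset.sum_add_distrib]

theorem mem_matchingSolutions_iff {d m : ℕ} {A : Matrix (Fin m) (Fin d) ℤ} {v : Fin d → ℕ} :
    v ∈ matchingSolutions A ↔ ∀ i, weightedSum (A i) v = 0 :=
  funext_iff

theorem mem_matchingSolutions_of_add_mem {d m : ℕ} {A : Matrix (Fin m) (Fin d) ℤ}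
    (u : Fin d → ℕ) (hu : u ∈ matchingSolutions A) (w : Fin d → ℕ)
    (huw : u + w ∈ matchingSolutions A) : w ∈ matchingSolutions A := by
  rw [mem_matchingSolutions_iff] at *
  intro i
  simpa [hu i] using huw i

/-- Combinatorial core of Theorem 4: if every nonzero solution of the matching
equations with zero boundary edge degree has Euler characteristic at most `-1`,
then for any bounds `n`, `b` there are only finitely many solutions with
boundary edge degree at most `b` and Euler characteristic at least `-n`. -/
theorem finitely_many_bounded_solutions (d m : ℕ) (hd : 0 < d) (hm : 0 < m)
    (A : Matrix (Fin m) (Fin d) ℤ) (c : Fin d → ℕ) (e : Fin d → ℤ)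
    (h : ∀ v ∈ matchingSolutions A, v ≠ 0 → (∑ j, c j * v j) = 0 →
      (∑ j, e j * (v j : ℤ)) ≤ -1) :
    ∀ n b : ℕ,
      {v : Fin d → ℕ | v ∈ matchingSolutions A ∧ (∑ j, c j * v j) ≤ b ∧
        -(n : ℤ) ≤ ∑ j, e j * (v j : ℤ)}.Finite :=
  fun n b => finitely_many_bounded_solutions_general mem_matchingSolutions_of_add_mem
    (weightedSum c) (weightedSum e) h b (-n)
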